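/- arXiv:1811.06113 — 2 statements merged into one kernel-verified Lean document; each statement's English description precedes it below -/
import Mathlib

section
/- For every supplier i and every bid vector α ∈ ℝ^N, the function t ↦ φ_i(α[i := t]) (supplier i's profit as a function of her own bid, with the other bids held fixed) is strictly concave on ℝ, where α[i := t] denotes α with its i-th coordinate replaced by t. -/
/-!
Completing the square turns the profit into `((R - m) ^ 2 - (αᵢ - m) ^ 2) / (2 * βᵢ)`, where `m` is
the marginal cost at zero output. As a function of the own bid `αᵢ`, the price `R` is affine with
slope `β̂ᵢ`, so the profit is a quadratic with leading coefficient `(β̂ᵢ ^ 2 - 1) / (2 * βᵢ)`. This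
is negative because a second supplier with positive inverse slope forces `β̂ᵢ < 1`.
-/

open Function Set

theorem strictConcaveOn_quadratic {𝕜 : Type*} [CommRing 𝕜] [LinearOrder 𝕜] [IsStrictOrderedRing 𝕜]
    {a : 𝕜} (ha : a < 0) (b c : 𝕜) :
    StrictConcaveOn 𝕜 univ fun t : 𝕜 ↦ a * t ^ 2 + b * t + c := by
  refine ⟨convex_univ, fun x _ y _ hxy p q hp hq hpq ↦ ?_⟩
  obtain rfl : q = 1 - p := eq_sub_of_add_eq' hpq
  simp only [smul_eq_mul]
  have gap_pos : 0 < -a * (p * (1 - p) * (x - y) ^ 2) :=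
    mul_pos (neg_pos.mpr ha) (mul_pos (mul_pos hp hq) (sq_pos_of_ne_zero (sub_ne_zero.mpr hxy)))
  linear_combination gap_pos

theorem div_sum_lt_one {ι 𝕜 : Type*} [Fintype ι] [Nontrivial ι] [Field 𝕜] [LinearOrder 𝕜]
    [IsStrictOrderedRing 𝕜] {w : ι → 𝕜} (hw : ∀ l, 0 < w l) (i : ι) :
    w i / ∑ l, w l < 1 := by
  obtain ⟨j, hji⟩ := exists_ne i
  have lt_sum : w i < ∑ l, w l :=
    Finset.single_lt_sum hji (Finset.mem_univ i) (Finset.mem_univ j) (hw j) fun l _ _ ↦ (hw l).le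
  exact (div_lt_one ((hw i).trans lt_sum)).mpr lt_sum

section Market

variable {ι 𝕜 : Type*} [Fintype ι] [Field 𝕜]

/-- The market clearing price `R(α)`: the price at which the total dispatch equals the demand
`Q`. -/
def clearingPrice (β : ι → 𝕜) (Q : 𝕜) (α : ι → 𝕜) : 𝕜 :=
  (Q + ∑ l, α l / β l) / ∑ l, 1 / β l

/-- The normalized inverse slope `β̂ᵢ`: the sensitivity of the clearing price to the bid of
supplier `i`. -/
def normalizedInvSlope (β : ι → 𝕜) (i : ι) : 𝕜 :=
  1 / β i / ∑ l, 1 / β l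

/-- The dispatch `Pᵢ(α)`: the output at which the bid curve `αᵢ + βᵢ P` of supplier `i` meets the
clearing price. -/
def dispatch (β : ι → 𝕜) (Q : 𝕜) (α : ι → 𝕜) (i : ι) : 𝕜 :=
  (clearingPrice β Q α - α i) / β i

/-- The profit `φᵢ(α)` of a supplier whose true cost of producing `P` is `m P + βᵢ P² / 2`. The
number `m` stands for `θᵢ₁ + θᵢ₂ ξ`. -/
def profit (β : ι → 𝕜) (Q m : 𝕜) (i : ι) (α : ι → 𝕜) : 𝕜 :=
  (clearingPrice β Q α - m) * dispatch β Q α i - β i / 2 * dispatch β Q α i ^ 2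

theorem clearingPrice_update [DecidableEq ι] (β : ι → 𝕜) (Q : 𝕜) (α : ι → 𝕜) (i : ι) (t : 𝕜) :
    clearingPrice β Q (update α i t) =
      clearingPrice β Q α + normalizedInvSlope β i * (t - α i) := by
  have sum_sub_sum : ∑ l, update α i t l / β l - ∑ l, α l / β l = (t - α i) / β i := by
    rw [← Finset.sum_sub_distrib, Fintype.sum_eq_single i fun l hl ↦ by simp [hl], update_self,
      sub_div]
  rw [clearingPrice, clearingPrice, normalizedInvSlope, eq_add_of_sub_eq sum_sub_sum]
  ring

theorem profit_eq_sq_sub_sq_div [NeZero (2 : 𝕜)] {β : ι → 𝕜} {i : ι} (hi : β i ≠ 0)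
    (Q m : 𝕜) (α : ι → 𝕜) :
    profit β Q m i α = ((clearingPrice β Q α - m) ^ 2 - (α i - m) ^ 2) / (2 * β i) := by
  rw [profit, dispatch]
  field_simp
  ring

variable [LinearOrder 𝕜] [IsStrictOrderedRing 𝕜] {β : ι → 𝕜}

theorem abs_normalizedInvSlope_lt_one [Nontrivial ι] (hβ : ∀ l, 0 < β l) (i : ι) :
    |normalizedInvSlope β i| < 1 := by
  have inv_pos (l : ι) : 0 < 1 / β l := one_div_pos.mpr (hβ l)
  have nonneg : 0 ≤ normalizedInvSlope β i :=
    div_nonneg (inv_pos i).le (Finset.sum_nonneg fun l _ ↦ (inv_pos l).le)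
  exact (abs_of_nonneg nonneg).trans_lt (div_sum_lt_one inv_pos i)

variable [DecidableEq ι]

theorem strictConcaveOn_profit_update {i : ι} (hi : 0 < β i)
    (hslope : |normalizedInvSlope β i| < 1) (Q m : 𝕜) (α : ι → 𝕜) :
    StrictConcaveOn 𝕜 univ fun t ↦ profit β Q m i (update α i t) := by
  set b := normalizedInvSlope β i with hb
  set r := clearingPrice β Q α - b * α i - m with hr
  have leading_neg : (b ^ 2 - 1) / (2 * β i) < 0 :=
    div_neg_of_neg_of_pos (sub_neg.mpr ((sq_lt_one_iff_abs_lt_one b).mpr hslope))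
      (mul_pos two_pos hi)
  have profit_eq_quadratic (t : 𝕜) : profit β Q m i (update α i t) =
      (b ^ 2 - 1) / (2 * β i) * t ^ 2 + (b * r + m) / β i * t + (r ^ 2 - m ^ 2) / (2 * β i) := by
    rw [profit_eq_sq_sub_sq_div hi.ne', clearingPrice_update, update_self, ← hb, hr]
    field_simp
    ring
  simpa only [profit_eq_quadratic] using strictConcaveOn_quadratic leading_neg _ _

theorem profit_strictConcaveOn_general [Nontrivial ι] (hβ : ∀ l, 0 < β l) (Q m : 𝕜) (i : ι)
    (α : ι → 𝕜) :
    StrictConcaveOn 𝕜 univ fun t ↦ profit β Q m i (update α i t) :=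
  strictConcaveOn_profit_update (hβ i) (abs_normalizedInvSlope_lt_one hβ i) Q m α

end Market

/-- **Strict concavity of each supplier's profit in her own bid.** -/
theorem profit_strictConcaveOn
    (N : ℕ) (hN : 2 ≤ N) (β : Fin N → ℝ) (hβ : ∀ i, 0 < β i)
    (Q ξ : ℝ) (θ1 θ2 : Fin N → ℝ)
    (S : ℝ) (hS : S = ∑ l, 1 / β l)
    (R : (Fin N → ℝ) → ℝ)
    (hR : ∀ α, R α = (Q + ∑ l, α l / β l) / S)
    (P : (Fin N → ℝ) → Fin N → ℝ)
    (hP : ∀ α i, P α i = (R α - α i) / β i)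
    (φ : Fin N → (Fin N → ℝ) → ℝ)
    (hφ : ∀ i α, φ i α
      = (R α - (θ1 i + θ2 i * ξ)) * P α i - β i / 2 * (P α i) ^ 2)
    (i : Fin N) (α : Fin N → ℝ) :
    StrictConcaveOn ℝ Set.univ (fun t : ℝ => φ i (Function.update α i t)) := by
  have : Nontrivial (Fin N) := Fin.nontrivial_iff_two_le.mpr hN
  simpa only [profit, dispatch, clearingPrice, hφ, hP, hR, hS] using
    profit_strictConcaveOn_general hβ Q (θ1 i + θ2 i * ξ) i α
end

section
/- Eventual monotone decrease of the crude bound: fix an integer n ≥ 0 and a real δ with 0 < δ < 1, and define η̄ : (0, ∞) → ℝ by η̄(x) = Σ_{i=0}^{n} (x^i / i!) · δ^i · (1−δ)^{x−i}, where (1−δ)^{x−i} = exp((x−i) · log(1−δ)). Then η̄ is strictly decreasing on the interval ( n / (−log(1−δ)), ∞ ). -/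
/-!
Write `c = -log (1 - δ) > 0`. Up to a positive constant, the `i`-th summand is
`x ^ i * exp (-(c * x))`, whose logarithmic derivative `i / x - c` is negative for `x > i / c`.
Since `i ≤ n`, every summand, and hence the sum, is strictly decreasing beyond `n / c`.
-/

theorem strictAntiOn_finset_sum {ι α M : Type*} [Preorder α] [AddCommMonoid M] [PartialOrder M]
    [IsOrderedCancelAddMonoid M] {s : Finset ι} (hs : s.Nonempty) {f : ι → α → M} {t : Set α}
    (hf : ∀ i ∈ s, StrictAntiOn (f i) t) : StrictAntiOn (fun x ↦ ∑ i ∈ s, f i x) t :=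
  fun _ hx _ hy hxy ↦ Finset.sum_lt_sum_of_nonempty hs fun i hi ↦ hf i hi hx hy hxy

theorem hasDerivAt_rpow_mul_exp_neg (r c : ℝ) {x : ℝ} (hx : x ≠ 0) :
    HasDerivAt (fun y ↦ y ^ r * Real.exp (-(c * y)))
      (x ^ r * Real.exp (-(c * x)) * (r / x - c)) x := by
  have hpow := Real.hasDerivAt_rpow_const (p := r) (Or.inl hx)
  have hexp : HasDerivAt (fun y ↦ Real.exp (-(c * y))) (Real.exp (-(c * x)) * -(c * 1)) x :=
    ((hasDerivAt_id x).const_mul c).neg.exp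
  refine (hpow.mul hexp).congr_deriv ?_
  rw [Real.rpow_sub_one hx]
  ring

theorem strictAntiOn_rpow_mul_exp_neg {r c : ℝ} (hr : 0 ≤ r) (hc : 0 < c) :
    StrictAntiOn (fun x ↦ x ^ r * Real.exp (-(c * x))) (Set.Ici (r / c)) := by
  refine strictAntiOn_of_deriv_neg (convex_Ici _) ?_ fun x hx ↦ ?_
  · exact ((Real.continuous_rpow_const hr).mul (by fun_prop)).continuousOn
  · rw [interior_Ici, Set.mem_Ioi] at hx
    have hx_pos : 0 < x := (div_nonneg hr hc.le).trans_lt hx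
    have hlogDeriv_neg : r / x - c < 0 := sub_neg.2 ((div_lt_comm₀ hc hx_pos).1 hx)
    rw [(hasDerivAt_rpow_mul_exp_neg r c hx_pos.ne').deriv]
    exact mul_neg_of_pos_of_neg (by positivity) hlogDeriv_neg

theorem strictAntiOn_sum_mul_rpow_mul_exp_neg {ι : Type*} {s : Finset ι} (hs : s.Nonempty)
    {w r : ι → ℝ} {R c : ℝ} (hw : ∀ i ∈ s, 0 < w i) (hr : ∀ i ∈ s, 0 ≤ r i)
    (hrR : ∀ i ∈ s, r i ≤ R) (hc : 0 < c) :
    StrictAntiOn (fun x ↦ ∑ i ∈ s, w i * (x ^ r i * Real.exp (-(c * x)))) (Set.Ici (R / c)) := by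
  refine strictAntiOn_finset_sum hs fun i hi x hx y hy hxy ↦ ?_
  have hsubset : Set.Ici (R / c) ⊆ Set.Ici (r i / c) :=
    Set.Ici_subset_Ici.2 (div_le_div_of_nonneg_right (hrR i hi) hc.le)
  exact mul_lt_mul_of_pos_left
    (strictAntiOn_rpow_mul_exp_neg (hr i hi) hc (hsubset hx) (hsubset hy) hxy) (hw i hi)

/-- **Eventual monotone decrease of the crude bound.** -/
theorem crude_bound_strictAntiOn
    (n : ℕ) (δ : ℝ) (hδ0 : 0 < δ) (hδ1 : δ < 1)
    (etaBar : ℝ → ℝ)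
    (hetaBar : ∀ x : ℝ, etaBar x
      = ∑ i ∈ Finset.range (n + 1),
          x ^ i / (Nat.factorial i : ℝ) * δ ^ i
            * Real.exp ((x - (i : ℝ)) * Real.log (1 - δ))) :
    StrictAntiOn etaBar (Set.Ioi ((n : ℝ) / (-Real.log (1 - δ)))) := by
  have hrate : 0 < -Real.log (1 - δ) :=
    neg_pos.2 (Real.log_neg (sub_pos.2 hδ1) (sub_lt_self 1 hδ0))
  let w (i : ℕ) : ℝ := δ ^ i / (Nat.factorial i : ℝ) * Real.exp (-(i * Real.log (1 - δ)))
  have hw (i : ℕ) : 0 < w i := by positivity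
  have hetaBar_eq : etaBar = fun x ↦ ∑ i ∈ Finset.range (n + 1),
      w i * (x ^ (i : ℝ) * Real.exp (-(-Real.log (1 - δ) * x))) := by
    funext x
    rw [hetaBar]
    refine Finset.sum_congr rfl fun i _ ↦ ?_
    have hexponent : (x - i) * Real.log (1 - δ)
        = -(i * Real.log (1 - δ)) + -(-Real.log (1 - δ) * x) := by ring
    rw [hexponent, Real.exp_add, Real.rpow_natCast]
    ring
  rw [hetaBar_eq]
  refine (strictAntiOn_sum_mul_rpow_mul_exp_neg Finset.nonempty_range_add_one (fun i _ ↦ hw i)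
    (fun i _ ↦ i.cast_nonneg) (fun i hi ↦ ?_) hrate).mono Set.Ioi_subset_Ici_self
  exact Nat.cast_le.2 (Finset.mem_range_succ_iff.1 hi)
end
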